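/- Fix an integer n ≥ 1 and real numbers β > 0, γ > 0, c_μ, c_σ. Let μ, σ : ℝ → ℝ be functions such that μ(α) − α/γ → c_μ and σ(α) − √(2α/γ) → c_σ as α → +∞. Then ∫_{ℝⁿ} | σ(α)^n · p_{L,α}(μ(α) + σ(α)x_1, …, μ(α) + σ(α)x_n) − p_G(x_1, …, x_n) | dx → 0 as α → +∞; in particular the probability measures induced by the rescaled Laguerre β-ensemble eigenvalue densities converge in total variation to the measure with density p_G. -/

import Mathlib

open Filter MeasureTheory

/-- The Vandermonde determinant `Δ(x) = ∏_{j>k} (x_j − x_k)`. -/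
noncomputable def vdm (n : ℕ) (x : Fin n → ℝ) : ℝ :=
  ∏ p ∈ Finset.univ.filter (fun p : Fin n × Fin n => p.2 < p.1), (x p.1 - x p.2)

/-- The normalization constant of the Gaussian β-ensemble. -/
noncomputable def ZG (n : ℕ) (β γ : ℝ) : ℝ :=
  (2 * Real.pi) ^ ((n : ℝ) / 2) * ((n.factorial : ℝ) / Real.Gamma (β / 2) ^ n) *
    ∏ k ∈ Finset.range n,
      Real.Gamma (((k : ℝ) + 1) * β / 2) / (2 * γ) ^ ((1 + (k : ℝ) * β) / 2)

/-- The Gaussian β-ensemble joint eigenvalue density. -/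
noncomputable def pG (n : ℕ) (β γ : ℝ) (x : Fin n → ℝ) : ℝ :=
  (ZG n β γ)⁻¹ * |vdm n x| ^ β * ∏ k, Real.exp (-γ * (x k) ^ 2)

/-- The normalization constant of the Laguerre β-ensemble with parameter `α`. -/
noncomputable def ZL (n : ℕ) (β γ α : ℝ) : ℝ :=
  ((n.factorial : ℝ) / Real.Gamma (β / 2) ^ n) *
    ∏ k ∈ Finset.range n,
      Real.Gamma (α + 1 + (k : ℝ) * β / 2) * Real.Gamma (((k : ℝ) + 1) * β / 2) /
        γ ^ (α + 1 + (k : ℝ) * β)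

/-- The Laguerre β-ensemble joint eigenvalue density. -/
noncomputable def pL (n : ℕ) (β γ α : ℝ) (x : Fin n → ℝ) : ℝ :=
  (ZL n β γ α)⁻¹ * |vdm n x| ^ β *
    ∏ k, (if 0 < x k then (x k) ^ α * Real.exp (-γ * x k) else 0)

/-!
Under `t = μ + σ y`, with `r = σ / μ`, the one-particle weight `w(t) = t ^ α exp (-γ t)` satisfies
`w(μ + σ y) / w(μ) = exp (α (log (1 + r y) - r y) + σ (α / μ - γ) y)`.
The scaling forces `r → 0`, `α r² → 2γ` and `σ (α / μ - γ) → 0`, so this ratio tends to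
`exp (-γ y²)`. Moreover `log (1 + u) ≤ u - u² / (2 (2 + u))` gives the domination by
`exp (γ - γ |y| / 4)`, uniformly along the limit.

Integrating the ratio in `y` turns this one-dimensional limit into the asymptotics of
`Γ (α + 1)`; applied with `α + k β / 2` in place of `α`, it yields the limit of the normalization
constants. As the Vandermonde factor is homogeneous, translation invariant and of polynomial growth,
the rescaled Laguerre densities then converge pointwise to the Gaussian one under an integrable
bound, hence in `L¹`.
-/

open Asymptotics Real Topology

section General

theorem log_one_add_le_sub_sq_div {u : ℝ} (hu : -1 < u) :
    log (1 + u) ≤ u - u ^ 2 / (2 * (2 + u)) := by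
  set r := √(1 + u)
  have hr0 : 0 < r := sqrt_pos.2 (by linarith)
  have hr2 : r ^ 2 = 1 + u := sq_sqrt (by linarith)
  have hlog : log (1 + u) ≤ 2 * (r - 1) := by
    rw [← hr2, log_pow]
    exact_mod_cast mul_le_mul_of_nonneg_left (log_le_sub_one_of_pos hr0) zero_le_two
  have hsq : u ^ 2 / (2 * (2 + u)) ≤ (r - 1) ^ 2 := by
    rw [div_le_iff₀ (by linarith), show u = r ^ 2 - 1 by linarith]
    nlinarith [sq_nonneg ((r - 1) ^ 2)]
  linarith

theorem isLittleO_log_one_add_sub :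
    (fun t : ℝ => log (1 + t) - t + t ^ 2 / 2) =o[𝓝 0] fun t => t ^ 2 := by
  refine IsBigO.trans_isLittleO (g := fun t : ℝ => t ^ 3) (.of_bound 2 ?_)
    (isLittleO_pow_pow (by norm_num))
  filter_upwards [Metric.ball_mem_nhds (0 : ℝ) one_half_pos] with t ht
  have ht : |t| < 1 / 2 := by simpa using ht
  have htaylor := abs_log_sub_add_sum_range_le (x := -t) (by rw [abs_neg]; linarith) 2
  simp only [Finset.sum_range_succ, Finset.sum_range_zero, abs_neg, sub_neg_eq_add] at htaylor
  calc ‖log (1 + t) - t + t ^ 2 / 2‖ ≤ |t| ^ 3 / (1 - |t|) := by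
        refine (congrArg abs ?_).trans_le htaylor
        push_cast
        ring
    _ ≤ 2 * |t| ^ 3 := by
        rw [div_le_iff₀ (by linarith)]
        nlinarith [pow_nonneg (abs_nonneg t) 3]
    _ = 2 * ‖t ^ 3‖ := by rw [norm_pow, norm_eq_abs]

theorem tendsto_mul_log_one_add_sub {ι : Type*} {l : Filter ι} {a t : ι → ℝ} {c : ℝ}
    (ht : Tendsto t l (𝓝 0)) (hat : Tendsto (fun i => a i * t i ^ 2) l (𝓝 c)) :
    Tendsto (fun i => a i * (log (1 + t i) - t i)) l (𝓝 (-(c / 2))) := by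
  have hrem : Tendsto (fun i => a i * (log (1 + t i) - t i + t i ^ 2 / 2)) l (𝓝 0) :=
    (isLittleO_one_iff ℝ).1 <|
      ((isBigO_refl a l).mul_isLittleO (isLittleO_log_one_add_sub.comp_tendsto ht)).trans_isBigO
        (hat.isBigO_one ℝ)
  convert hrem.sub (hat.div_const 2) using 2
  · ring
  · ring

theorem isEquivalent_sqrt_add_const {ι : Type*} {l : Filter ι} {f : ι → ℝ}
    (hf : Tendsto f l atTop) (c : ℝ) : (fun i => √(f i + c)) ~[l] fun i => √(f i) := by
  have hfc : (fun i => f i + c) ~[l] fun i => |f i| :=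
    (IsEquivalent.refl.add_const_of_norm_tendsto_atTop
      (tendsto_norm_atTop_atTop.comp hf)).congr_right
        ((hf.eventually_ge_atTop 0).mono fun i hi => (abs_of_nonneg hi).symm)
  refine ((hfc.rpow (r := 1 / 2) fun i => abs_nonneg (f i)).congr_left
    (.of_forall fun i => (sqrt_eq_rpow _).symm)).congr_right ?_
  filter_upwards [hf.eventually_ge_atTop 0] with i hi
  simp only [Pi.pow_apply, abs_of_nonneg hi, sqrt_eq_rpow]

theorem integrable_one_add_abs_rpow_mul_exp_neg_mul_abs (d : ℝ) {b : ℝ} (hb : 0 < b) :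
    Integrable fun y : ℝ => (1 + |y|) ^ d * exp (-b * |y|) := by
  have hcont : ContinuousOn (fun t : ℝ => (1 + t) ^ d * exp (-b * t)) (Set.Ici 0) := by
    refine ContinuousOn.mul (.rpow_const (by fun_prop) fun t ht => Or.inl ?_) (by fun_prop)
    linarith [Set.mem_Ici.1 ht]
  have hpow : (fun t : ℝ => (1 + t) ^ d) =O[atTop] fun t => exp (b / 2 * (1 + t)) :=
    ((isLittleO_rpow_exp_pos_mul_atTop d (half_pos hb)).comp_tendsto
      (tendsto_atTop_add_const_left atTop 1 tendsto_id)).isBigO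
  have hdecay : (fun t : ℝ => (1 + t) ^ d * exp (-b * t)) =O[atTop] fun t => exp (-(b / 2) * t) :=
    calc (fun t : ℝ => (1 + t) ^ d * exp (-b * t))
        =O[atTop] fun t => exp (b / 2 * (1 + t)) * exp (-b * t) := hpow.mul (isBigO_refl _ _)
      _ = fun t => exp (b / 2) * exp (-(b / 2) * t) := by
        funext t
        rw [← exp_add, ← exp_add]
        ring_nf
      _ =O[atTop] fun t => exp (-(b / 2) * t) := isBigO_const_mul_self _ _ _
  have hIoi := integrable_of_isBigO_exp_neg (half_pos hb) hcont hdecay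
  simpa using (integrable_fun_norm_addHaar volume (E := ℝ)
    (f := fun t : ℝ => (1 + t) ^ d * exp (-b * t))).2 (by simpa using hIoi)

theorem abs_smul_integral_comp_add_mul {F : Type*} [NormedAddCommGroup F] [NormedSpace ℝ F]
    (f : ℝ → F) (m : ℝ) {s : ℝ} (hs : s ≠ 0) : |s| • ∫ y, f (m + s * y) = ∫ t, f t := by
  rw [Measure.integral_comp_mul_left (fun t => f (m + t)), integral_add_left_eq_self f m,
    abs_inv, smul_inv_smul₀ (abs_ne_zero.2 hs)]

theorem tendsto_integral_norm_sub_of_dominated {ι X G : Type*} {l : Filter ι}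
    [l.IsCountablyGenerated] [MeasurableSpace X] {ν : Measure X} [NormedAddCommGroup G]
    {F : ι → X → G} {f : X → G} {bound : X → ℝ}
    (hF_meas : ∀ᶠ i in l, AEStronglyMeasurable (F i) ν) (hbound : Integrable bound ν)
    (hF_le : ∀ᶠ i in l, ∀ᵐ x ∂ν, ‖F i x‖ ≤ bound x)
    (hlim : ∀ᵐ x ∂ν, Tendsto (fun i => F i x) l (𝓝 (f x))) :
    Tendsto (fun i => ∫ x, ‖F i x - f x‖ ∂ν) l (𝓝 0) := by
  rcases l.eq_or_neBot with rfl | _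
  · exact tendsto_bot
  obtain ⟨u, hu⟩ := l.exists_seq_tendsto
  obtain ⟨N, hN⟩ := eventually_atTop.1 (hu.eventually (hF_meas.and hF_le))
  have hlim_seq : ∀ᵐ x ∂ν, Tendsto (fun k => F (u (k + N)) x) atTop (𝓝 (f x)) :=
    hlim.mono fun x hx => (hx.comp hu).comp (tendsto_add_atTop_nat N)
  have hf_meas : AEStronglyMeasurable f ν :=
    aestronglyMeasurable_of_tendsto_ae atTop (fun k => (hN (k + N) (by lia)).1) hlim_seq
  have hf_le : ∀ᵐ x ∂ν, ‖f x‖ ≤ bound x := by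
    filter_upwards [hlim_seq, ae_all_iff.2 fun k => (hN (k + N) (by lia)).2] with x hx hle
    exact le_of_tendsto' hx.norm hle
  rw [← integral_zero X ℝ (μ := ν)]
  refine tendsto_integral_filter_of_dominated_convergence (fun x => bound x + bound x)
    (hF_meas.mono fun i hi => (hi.sub hf_meas).norm) ?_ (hbound.add hbound) ?_
  · filter_upwards [hF_le] with i hi
    filter_upwards [hi, hf_le] with x hFx hfx
    rw [norm_norm]
    exact (norm_sub_le _ _).trans (add_le_add hFx hfx)
  · filter_upwards [hlim] with x hx
    simpa using (hx.sub_const (f x)).norm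

end General

section LaguerreWeight

/-- The one-particle weight `t ^ α * exp (-γ t)` of the Laguerre ensemble, extended by `0` to
`t ≤ 0`. -/
noncomputable def laguerreWeight (γ α t : ℝ) : ℝ :=
  if 0 < t then t ^ α * exp (-γ * t) else 0

variable {γ α m s y t : ℝ}

theorem laguerreWeight_of_pos (ht : 0 < t) : laguerreWeight γ α t = t ^ α * exp (-γ * t) :=
  if_pos ht

theorem laguerreWeight_of_nonpos (ht : t ≤ 0) : laguerreWeight γ α t = 0 :=
  if_neg ht.not_gt

theorem laguerreWeight_pos (ht : 0 < t) : 0 < laguerreWeight γ α t := by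
  rw [laguerreWeight_of_pos ht]
  positivity

theorem laguerreWeight_nonneg (γ α t : ℝ) : 0 ≤ laguerreWeight γ α t := by
  rcases le_or_gt t 0 with ht | ht
  · exact (laguerreWeight_of_nonpos ht).ge
  · exact (laguerreWeight_pos ht).le

theorem measurable_laguerreWeight (γ α : ℝ) : Measurable (laguerreWeight γ α) :=
  .ite measurableSet_Ioi (by fun_prop) measurable_const

theorem laguerreWeight_add_exponent (ht : 0 < t) (c : ℝ) :
    laguerreWeight γ (α + c) t = t ^ c * laguerreWeight γ α t := by
  rw [laguerreWeight_of_pos ht, laguerreWeight_of_pos ht, rpow_add ht]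
  ring

theorem laguerreWeight_affine_div_eq_exp (hm : 0 < m) (hy : 0 < m + s * y) :
    laguerreWeight γ α (m + s * y) / laguerreWeight γ α m =
      exp (α * (log (1 + s / m * y) - s / m * y) + s * (α / m - γ) * y) := by
  have hlog : log (1 + s / m * y) = log (m + s * y) - log m := by
    rw [← log_div hy.ne' hm.ne']
    congr 1
    field_simp
  rw [laguerreWeight_of_pos hy, laguerreWeight_of_pos hm, rpow_def_of_pos hy, rpow_def_of_pos hm,
    ← exp_add, ← exp_add, ← exp_sub, hlog]
  congr 1
  field_simp
  ring

theorem laguerreWeight_affine_div_le (hγ : 0 < γ) (hα : 0 ≤ α) (hm : 0 < m)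
    (hs : 0 ≤ s) (hsm : s ≤ m) (hcurv : γ ≤ α * (s / m) ^ 2)
    (hdrift : |s * (α / m - γ)| ≤ γ / 4) (y : ℝ) :
    laguerreWeight γ α (m + s * y) / laguerreWeight γ α m ≤
      exp γ * exp (-(γ / 4) * |y|) := by
  rcases le_or_gt (m + s * y) 0 with hy | hy
  · rw [laguerreWeight_of_nonpos hy, zero_div]
    positivity
  rw [laguerreWeight_affine_div_eq_exp hm hy, ← exp_add, exp_le_exp]
  set u := s / m * y with hu
  have hu1 : -1 < u := by
    have : 1 + u = (m + s * y) / m := by rw [hu]; field_simp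
    have : 0 < (m + s * y) / m := by positivity
    linarith
  have hu_le : u ≤ |y| := by
    refine (le_abs_self u).trans ?_
    rw [hu, abs_mul, abs_of_nonneg (by positivity)]
    exact mul_le_of_le_one_left (abs_nonneg y) ((div_le_one hm).2 hsm)
  have hquad : γ * y ^ 2 ≤ α * u ^ 2 :=
    calc γ * y ^ 2 ≤ α * (s / m) ^ 2 * y ^ 2 := by gcongr
      _ = α * u ^ 2 := by rw [hu]; ring
  have hlog : α * (log (1 + u) - u) ≤ γ - γ / 2 * |y| :=
    calc α * (log (1 + u) - u) ≤ α * -(u ^ 2 / (2 * (2 + u))) := by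
          gcongr
          linarith [log_one_add_le_sub_sq_div hu1]
      _ = -(α * u ^ 2 / (2 * (2 + u))) := by ring
      _ ≤ -(γ * y ^ 2 / (2 * (2 + |y|))) := by gcongr; linarith
      _ ≤ γ - γ / 2 * |y| := by
          rw [neg_le, le_div_iff₀ (by positivity), ← sq_abs y]
          nlinarith
  have hlin : s * (α / m - γ) * y ≤ γ / 4 * |y| := by
    refine (le_abs_self _).trans ?_
    rw [abs_mul]
    gcongr
  linarith

theorem integral_laguerreWeight (hγ : 0 < γ) (hα : -1 < α) :
    ∫ t, laguerreWeight γ α t = Gamma (α + 1) / γ ^ (α + 1) := by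
  have hind : laguerreWeight γ α =
      (Set.Ioi 0).indicator fun t => t ^ (α + 1 - 1) * exp (-(γ * t)) := by
    ext t
    simp only [laguerreWeight, Set.indicator, Set.mem_Ioi, add_sub_cancel_right, neg_mul]
  rw [hind, integral_indicator measurableSet_Ioi,
    integral_rpow_mul_exp_neg_mul_Ioi (by linarith) hγ, one_div, inv_rpow hγ.le, mul_comm,
    div_eq_mul_inv]

end LaguerreWeight

/-- The scaling regime of the Laguerre-to-Gaussian limit: along `l` the exponents `α` tend to
infinity, and the one-particle weight `t ^ α * exp (-γ t)` is viewed through `t = μ + σ y`, where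
the centre `μ` is `α / γ + o(√α)` and the width `σ` is equivalent to `√(2α / γ)`. -/
structure IsGaussianScaling {ι : Type*} (γ : ℝ) (l : Filter ι) (α μ σ : ι → ℝ) : Prop where
  tendsto_exponent : Tendsto α l atTop
  isLittleO_center : (fun i => μ i - α i / γ) =o[l] fun i => √(α i)
  isEquivalent_width : σ ~[l] fun i => √(2 * α i / γ)

namespace IsGaussianScaling

variable {ι : Type*} {l : Filter ι} {γ : ℝ} {α μ σ : ι → ℝ}

theorem of_tendsto_sub {cμ cσ : ℝ} (hγ : 0 < γ) (hα : Tendsto α l atTop)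
    (hμ : Tendsto (fun i => μ i - α i / γ) l (𝓝 cμ))
    (hσ : Tendsto (fun i => σ i - √(2 * α i / γ)) l (𝓝 cσ)) :
    IsGaussianScaling γ l α μ σ where
  tendsto_exponent := hα
  isLittleO_center := (hμ.isBigO_one ℝ).trans_isLittleO <|
    (isLittleO_one_left_iff ℝ).2 (tendsto_norm_atTop_atTop.comp (tendsto_sqrt_atTop.comp hα))
  isEquivalent_width := (hσ.isBigO_one ℝ).trans_isLittleO <| (isLittleO_one_left_iff ℝ).2 <|
    tendsto_norm_atTop_atTop.comp <| tendsto_sqrt_atTop.comp <|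
      (hα.const_mul_atTop two_pos).atTop_div_const hγ

theorem add_const (h : IsGaussianScaling γ l α μ σ) (hγ : 0 < γ) (c : ℝ) :
    IsGaussianScaling γ l (fun i => α i + c) μ σ where
  tendsto_exponent := tendsto_atTop_add_const_right l c h.tendsto_exponent
  isLittleO_center := by
    have hconst : (fun _ : ι => c / γ) =o[l] fun i => √(α i) :=
      isLittleO_const_left.2 <| Or.inr <|
        tendsto_norm_atTop_atTop.comp (tendsto_sqrt_atTop.comp h.tendsto_exponent)
    refine ((h.isLittleO_center.sub hconst).congr_left fun i => ?_).trans_isTheta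
      (isEquivalent_sqrt_add_const h.tendsto_exponent c).symm.isTheta
    ring
  isEquivalent_width := by
    have hlim : Tendsto (fun i => 2 * α i / γ) l atTop :=
      (h.tendsto_exponent.const_mul_atTop two_pos).atTop_div_const hγ
    have hsum (i : ι) : 2 * (α i + c) / γ = 2 * α i / γ + 2 * c / γ := by ring
    simp only [hsum]
    exact h.isEquivalent_width.trans (isEquivalent_sqrt_add_const hlim _).symm

theorem eventually_exponent_pos (h : IsGaussianScaling γ l α μ σ) : ∀ᶠ i in l, 0 < α i :=
  h.tendsto_exponent.eventually_gt_atTop 0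

theorem tendsto_center_div_exponent (h : IsGaussianScaling γ l α μ σ) :
    Tendsto (fun i => μ i / α i) l (𝓝 (1 / γ)) := by
  have hinv : Tendsto (fun i => (√(α i))⁻¹) l (𝓝 0) :=
    (tendsto_sqrt_atTop.comp h.tendsto_exponent).inv_tendsto_atTop
  have hlim := (h.isLittleO_center.tendsto_div_nhds_zero.mul hinv).add_const (1 / γ)
  rw [zero_mul, zero_add] at hlim
  refine hlim.congr' ?_
  filter_upwards [h.eventually_exponent_pos] with i hα
  rw [← div_eq_mul_inv, div_div, mul_self_sqrt hα.le, sub_div, div_right_comm, div_self hα.ne',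
    sub_add_cancel]

theorem tendsto_width_div_sqrt_exponent (h : IsGaussianScaling γ l α μ σ) (hγ : 0 < γ) :
    Tendsto (fun i => σ i / √(α i)) l (𝓝 √(2 / γ)) := by
  have hequiv : (fun i => σ i / √(α i)) ~[l] fun i => √(2 * α i / γ) / √(α i) :=
    h.isEquivalent_width.div .refl
  refine hequiv.symm.tendsto_nhds (tendsto_const_nhds.congr' ?_)
  filter_upwards [h.eventually_exponent_pos] with i hα
  rw [mul_div_right_comm, sqrt_mul (by positivity), mul_div_cancel_right₀ _ (sqrt_pos.2 hα).ne']

theorem eventually_center_pos (h : IsGaussianScaling γ l α μ σ) (hγ : 0 < γ) :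
    ∀ᶠ i in l, 0 < μ i := by
  filter_upwards [h.eventually_exponent_pos,
    h.tendsto_center_div_exponent.eventually_const_lt (one_div_pos.2 hγ)] with i hα hμ
  exact (div_pos_iff_of_pos_right hα).1 hμ

theorem eventually_width_pos (h : IsGaussianScaling γ l α μ σ) (hγ : 0 < γ) :
    ∀ᶠ i in l, 0 < σ i := by
  filter_upwards [h.eventually_exponent_pos,
    (h.tendsto_width_div_sqrt_exponent hγ).eventually_const_lt (sqrt_pos.2 (div_pos two_pos hγ))]
    with i hα hσ
  exact (div_pos_iff_of_pos_right (sqrt_pos.2 hα)).1 hσ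

theorem tendsto_sqrt_exponent_mul_width_div_center (h : IsGaussianScaling γ l α μ σ) (hγ : 0 < γ) :
    Tendsto (fun i => √(α i) * (σ i / μ i)) l (𝓝 √(2 * γ)) := by
  have hlim := (h.tendsto_width_div_sqrt_exponent hγ).div h.tendsto_center_div_exponent
    (one_div_pos.2 hγ).ne'
  have hval : √(2 / γ) / (1 / γ) = √(2 * γ) := by
    rw [div_div_eq_mul_div, div_one, ← sqrt_sq hγ.le, ← sqrt_mul (by positivity), sqrt_sq hγ.le]
    congr 1
    field_simp
  rw [hval] at hlim
  refine hlim.congr' ?_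
  filter_upwards [h.eventually_exponent_pos, h.eventually_center_pos hγ] with i hα hμ
  have : 0 < √(α i) := sqrt_pos.2 hα
  simp only [Pi.div_apply]
  field_simp
  rw [sq_sqrt hα.le]

theorem tendsto_width_div_center (h : IsGaussianScaling γ l α μ σ) (hγ : 0 < γ) :
    Tendsto (fun i => σ i / μ i) l (𝓝 0) := by
  have hlim := (h.tendsto_sqrt_exponent_mul_width_div_center hγ).mul
    (tendsto_sqrt_atTop.comp h.tendsto_exponent).inv_tendsto_atTop
  rw [mul_zero] at hlim
  refine hlim.congr' ?_
  filter_upwards [h.eventually_exponent_pos] with i hα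
  have : 0 < √(α i) := sqrt_pos.2 hα
  simp only [Pi.inv_apply, Function.comp_apply]
  field_simp

theorem tendsto_curvature (h : IsGaussianScaling γ l α μ σ) (hγ : 0 < γ) :
    Tendsto (fun i => α i * (σ i / μ i) ^ 2) l (𝓝 (2 * γ)) := by
  have hlim := (h.tendsto_sqrt_exponent_mul_width_div_center hγ).pow 2
  rw [sq_sqrt (by positivity)] at hlim
  refine hlim.congr' ?_
  filter_upwards [h.eventually_exponent_pos] with i hα
  rw [mul_pow, sq_sqrt hα.le]

theorem tendsto_drift (h : IsGaussianScaling γ l α μ σ) (hγ : 0 < γ) :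
    Tendsto (fun i => σ i * (α i / μ i - γ)) l (𝓝 0) := by
  have hlim := ((h.tendsto_sqrt_exponent_mul_width_div_center hγ).mul
    h.isLittleO_center.tendsto_div_nhds_zero).const_mul (-γ)
  rw [mul_zero, mul_zero] at hlim
  refine hlim.congr' ?_
  filter_upwards [h.eventually_exponent_pos, h.eventually_center_pos hγ] with i hα hμ
  have : 0 < √(α i) := sqrt_pos.2 hα
  field_simp
  ring

theorem tendsto_center_div_width_sq (h : IsGaussianScaling γ l α μ σ) (hγ : 0 < γ) :
    Tendsto (fun i => μ i / σ i ^ 2) l (𝓝 (1 / 2)) := by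
  have hlim := h.tendsto_center_div_exponent.div
    ((h.tendsto_width_div_sqrt_exponent hγ).pow 2) (by positivity)
  have hval : 1 / γ / √(2 / γ) ^ 2 = 1 / 2 := by
    rw [sq_sqrt (by positivity)]
    field_simp
  rw [hval] at hlim
  refine hlim.congr' ?_
  filter_upwards [h.eventually_exponent_pos] with i hα
  simp only [Pi.div_apply]
  rw [div_pow, sq_sqrt hα.le, div_div_div_cancel_right₀ hα.ne']

theorem eventually_laguerreWeight_div_le (h : IsGaussianScaling γ l α μ σ) (hγ : 0 < γ) :
    ∀ᶠ i in l, ∀ y, laguerreWeight γ (α i) (μ i + σ i * y) / laguerreWeight γ (α i) (μ i) ≤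
      exp γ * exp (-(γ / 4) * |y|) := by
  have hdrift : ∀ᶠ i in l, |σ i * (α i / μ i - γ)| ≤ γ / 4 :=
    (h.tendsto_drift hγ).abs.eventually_le_const (by rw [abs_zero]; positivity)
  filter_upwards [h.eventually_exponent_pos, h.eventually_center_pos hγ, h.eventually_width_pos hγ,
    (h.tendsto_width_div_center hγ).eventually_le_const one_pos,
    (h.tendsto_curvature hγ).eventually_const_le (lt_two_mul_self hγ), hdrift]
    with i hα hμ hσ hratio hcurv hdrift y
  exact laguerreWeight_affine_div_le hγ hα.le hμ hσ.le ((div_le_one hμ).1 hratio) hcurv hdrift y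

theorem tendsto_laguerreWeight_div (h : IsGaussianScaling γ l α μ σ) (hγ : 0 < γ) (y : ℝ) :
    Tendsto (fun i => laguerreWeight γ (α i) (μ i + σ i * y) / laguerreWeight γ (α i) (μ i)) l
      (𝓝 (exp (-γ * y ^ 2))) := by
  have ht : Tendsto (fun i => σ i / μ i * y) l (𝓝 0) := by
    simpa using (h.tendsto_width_div_center hγ).mul_const y
  have hquad : Tendsto (fun i => α i * (σ i / μ i * y) ^ 2) l (𝓝 (2 * γ * y ^ 2)) := by
    simpa only [mul_pow, mul_assoc] using (h.tendsto_curvature hγ).mul_const (y ^ 2)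
  have hexponent := (tendsto_mul_log_one_add_sub ht hquad).add ((h.tendsto_drift hγ).mul_const y)
  rw [show -(2 * γ * y ^ 2 / 2) + 0 * y = -γ * y ^ 2 by ring] at hexponent
  refine ((continuous_exp.tendsto _).comp hexponent).congr' ?_
  filter_upwards [h.eventually_center_pos hγ, ht.eventually_const_lt neg_one_lt_zero] with i hμ hty
  have hpos : 0 < μ i + σ i * y := by
    rw [show μ i + σ i * y = μ i * (1 + σ i / μ i * y) by field_simp]
    exact mul_pos hμ (by linarith)
  exact (laguerreWeight_affine_div_eq_exp hμ hpos).symm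

theorem tendsto_integral_laguerreWeight_div [l.IsCountablyGenerated]
    (h : IsGaussianScaling γ l α μ σ) (hγ : 0 < γ) :
    Tendsto (fun i => ∫ y, laguerreWeight γ (α i) (μ i + σ i * y) / laguerreWeight γ (α i) (μ i)) l
      (𝓝 √(π / γ)) := by
  rw [← integral_gaussian γ]
  refine tendsto_integral_filter_of_dominated_convergence
    (fun y => exp γ * exp (-(γ / 4) * |y|)) (.of_forall fun i => ?_) ?_ ?_
    (.of_forall (h.tendsto_laguerreWeight_div hγ))
  · exact (((measurable_laguerreWeight γ (α i)).comp (by fun_prop)).div_const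
      _).aestronglyMeasurable
  · filter_upwards [h.eventually_laguerreWeight_div_le hγ] with i hi
    refine .of_forall fun y => ?_
    rw [norm_of_nonneg (div_nonneg (laguerreWeight_nonneg _ _ _) (laguerreWeight_nonneg _ _ _))]
    exact hi y
  · simpa using (integrable_one_add_abs_rpow_mul_exp_neg_mul_abs 0
      (show 0 < γ / 4 by positivity)).const_mul (exp γ)

theorem tendsto_Gamma_div_laguerreWeight [l.IsCountablyGenerated]
    (h : IsGaussianScaling γ l α μ σ) (hγ : 0 < γ) :
    Tendsto (fun i => Gamma (α i + 1) / γ ^ (α i + 1) / (σ i * laguerreWeight γ (α i) (μ i))) l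
      (𝓝 √(π / γ)) := by
  refine (h.tendsto_integral_laguerreWeight_div hγ).congr' ?_
  filter_upwards [h.eventually_exponent_pos, h.eventually_width_pos hγ] with i hα hσ
  have hsub := abs_smul_integral_comp_add_mul (laguerreWeight γ (α i)) (μ i) hσ.ne'
  rw [abs_of_pos hσ, smul_eq_mul] at hsub
  rw [integral_div, ← integral_laguerreWeight hγ (by linarith), ← hsub,
    mul_div_mul_left _ _ hσ.ne']

theorem tendsto_Gamma_add_const_div_laguerreWeight [l.IsCountablyGenerated]
    (h : IsGaussianScaling γ l α μ σ) (hγ : 0 < γ) (c : ℝ) :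
    Tendsto (fun i => Gamma (α i + 1 + c) / γ ^ (α i + 1 + 2 * c) /
        (σ i ^ (1 + 2 * c) * laguerreWeight γ (α i) (μ i))) l
      (𝓝 (√(2 * π) / (2 * γ) ^ ((1 + 2 * c) / 2))) := by
  have hpow : Tendsto (fun i => (μ i / σ i ^ 2 / γ) ^ c) l (𝓝 ((1 / 2 / γ) ^ c)) :=
    ((h.tendsto_center_div_width_sq hγ).div_const γ).rpow_const (Or.inl (by positivity))
  have hlim := ((h.add_const hγ c).tendsto_Gamma_div_laguerreWeight hγ).mul hpow
  have hval : √(π / γ) * (1 / 2 / γ) ^ c = √(2 * π) / (2 * γ) ^ ((1 + 2 * c) / 2) := by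
    rw [show (1 + 2 * c) / 2 = 1 / 2 + c by ring, rpow_add (by positivity), ← sqrt_eq_rpow,
      div_div, one_div, inv_rpow (by positivity), ← div_div, ← sqrt_div (by positivity),
      mul_div_mul_left _ _ two_ne_zero, ← div_eq_mul_inv]
  rw [hval] at hlim
  refine hlim.congr' ?_
  filter_upwards [h.eventually_center_pos hγ, h.eventually_width_pos hγ] with i hμ hσ
  have hσ2 : σ i ^ (2 * c) = (σ i ^ 2) ^ c := by rw [rpow_mul hσ.le, rpow_two]
  rw [laguerreWeight_add_exponent hμ, div_rpow (by positivity) hγ.le,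
    div_rpow hμ.le (by positivity), rpow_add hσ, rpow_one, hσ2, add_right_comm,
    show α i + 1 + 2 * c = α i + 1 + c + c by ring, rpow_add hγ (α i + 1 + c),
    add_right_comm (α i) 1 c]
  have : 0 < laguerreWeight γ (α i) (μ i) := laguerreWeight_pos hμ
  field_simp

end IsGaussianScaling

section Vandermonde

variable {n : ℕ}

theorem vdm_eq_det_vandermonde (x : Fin n → ℝ) : vdm n x = (Matrix.vandermonde x).det := by
  rw [Matrix.det_vandermonde, vdm, Finset.prod_filter, ← Finset.univ_product_univ,
    Finset.prod_product_right]
  refine Finset.prod_congr rfl fun j _ => ?_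
  rw [← Finset.prod_filter]
  exact Finset.prod_congr (by ext; simp) fun _ _ => rfl

theorem vdm_affine (m s : ℝ) (x : Fin n → ℝ) :
    vdm n (fun i => m + s * x i) = (∏ k ∈ Finset.range n, s ^ k) * vdm n x := by
  have hscale : Matrix.vandermonde (fun i => s * x i) =
      .of fun i j => s ^ (j : ℕ) * Matrix.vandermonde x i j := by
    ext i j
    simp only [Matrix.vandermonde_apply, Matrix.of_apply, mul_pow]
  rw [vdm_eq_det_vandermonde, vdm_eq_det_vandermonde, Finset.prod_range, ← Matrix.det_mul_row,
    ← hscale]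
  simp only [add_comm m]
  exact Matrix.det_vandermonde_add _ m

theorem measurable_vdm : Measurable (vdm n) := by
  unfold vdm
  fun_prop

theorem abs_vdm_le (x : Fin n → ℝ) : |vdm n x| ≤ ∏ k, (1 + |x k|) ^ (n ^ 2) := by
  set P := ∏ k, (1 + |x k|)
  have hone (k : Fin n) : 1 ≤ 1 + |x k| := le_add_of_nonneg_right (abs_nonneg _)
  have hP : 1 ≤ P := Finset.one_le_prod fun k _ => hone k
  have hfactor : ∀ p ∈ Finset.univ.filter (fun p : Fin n × Fin n => p.2 < p.1),
      |x p.1 - x p.2| ≤ P := fun p hp =>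
    calc |x p.1 - x p.2| ≤ (1 + |x p.1|) * (1 + |x p.2|) := by
          nlinarith [abs_sub (x p.1) (x p.2), abs_nonneg (x p.1), abs_nonneg (x p.2)]
      _ = ∏ k ∈ {p.1, p.2}, (1 + |x k|) :=
          (Finset.prod_pair (f := fun k => 1 + |x k|) (Finset.mem_filter.1 hp).2.ne').symm
      _ ≤ P := Finset.prod_mono_set_of_one_le hone (Finset.subset_univ _)
  calc |vdm n x| = ∏ p ∈ Finset.univ.filter (fun p : Fin n × Fin n => p.2 < p.1),
          |x p.1 - x p.2| := Finset.abs_prod _ _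
    _ ≤ ∏ _p ∈ Finset.univ.filter (fun p : Fin n × Fin n => p.2 < p.1), P :=
        Finset.prod_le_prod (fun _ _ => abs_nonneg _) hfactor
    _ = P ^ (Finset.univ.filter fun p : Fin n × Fin n => p.2 < p.1).card := Finset.prod_const _
    _ ≤ P ^ (n ^ 2) := pow_le_pow_right₀ hP <|
        (Finset.card_le_univ _).trans_eq (by simp [sq])
    _ = ∏ k, (1 + |x k|) ^ (n ^ 2) := (Finset.prod_pow _ _ _).symm

theorem integrable_abs_vdm_rpow_mul_prod_exp {β b : ℝ} (hβ : 0 ≤ β) (hb : 0 < b) :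
    Integrable fun x : Fin n → ℝ => |vdm n x| ^ β * ∏ k, exp (-b * |x k|) := by
  have hprod : Integrable fun x : Fin n → ℝ =>
      ∏ k, (1 + |x k|) ^ ((n ^ 2 : ℕ) * β) * exp (-b * |x k|) :=
    .fintype_prod fun _ => integrable_one_add_abs_rpow_mul_exp_neg_mul_abs _ hb
  refine hprod.mono' ?_ (.of_forall fun x => ?_)
  · have := measurable_vdm (n := n)
    exact Measurable.aestronglyMeasurable (by fun_prop)
  · rw [norm_of_nonneg (by positivity), Finset.prod_mul_distrib]
    gcongr
    calc |vdm n x| ^ β ≤ (∏ k, (1 + |x k|) ^ (n ^ 2)) ^ β :=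
          rpow_le_rpow (abs_nonneg _) (abs_vdm_le x) hβ
      _ = ∏ k, (1 + |x k|) ^ ((n ^ 2 : ℕ) * β) := by
          rw [← finsetProd_rpow _ _ fun k _ => by positivity]
          refine Finset.prod_congr rfl fun k _ => ?_
          rw [rpow_natCast_mul (by positivity)]

end Vandermonde

section EnsembleDensity

variable {n : ℕ} {β γ : ℝ}

theorem ZG_eq_prod (n : ℕ) (β γ : ℝ) :
    ZG n β γ = n.factorial / Gamma (β / 2) ^ n * ∏ k ∈ Finset.range n,
      √(2 * π) / (2 * γ) ^ ((1 + k * β) / 2) * Gamma ((k + 1) * β / 2) := by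
  have hpow : (2 * π) ^ ((n : ℝ) / 2) = ∏ _k ∈ Finset.range n, √(2 * π) := by
    rw [Finset.prod_const, Finset.card_range, sqrt_eq_rpow, ← rpow_mul_natCast (by positivity),
      one_div, div_eq_inv_mul]
  rw [ZG, hpow, mul_comm (∏ _k ∈ _, _), mul_assoc, ← Finset.prod_mul_distrib]
  congr 1
  refine Finset.prod_congr rfl fun k _ => ?_
  ring

theorem ZG_pos (n : ℕ) (hβ : 0 < β) (hγ : 0 < γ) : 0 < ZG n β γ := by
  rw [ZG]
  have := Gamma_pos_of_pos (half_pos hβ)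
  refine mul_pos (by positivity) (Finset.prod_pos fun k _ => ?_)
  have := Gamma_pos_of_pos (show 0 < ((k : ℝ) + 1) * β / 2 by positivity)
  positivity

theorem pow_mul_pL_affine {α m s : ℝ} (hm : 0 < m) (hs : 0 < s) (x : Fin n → ℝ) :
    s ^ n * pL n β γ α (fun i => m + s * x i) =
      (ZL n β γ α / ∏ k ∈ Finset.range n, s ^ (1 + k * β) * laguerreWeight γ α m)⁻¹ *
        |vdm n x| ^ β * ∏ k, laguerreWeight γ α (m + s * x k) / laguerreWeight γ α m := by
  have hw : laguerreWeight γ α m ≠ 0 := (laguerreWeight_pos hm).ne'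
  have hvdm : s ^ n * |vdm n (fun i => m + s * x i)| ^ β =
      (∏ k ∈ Finset.range n, s ^ (1 + k * β)) * |vdm n x| ^ β := by
    have hs_prod : s ^ n = ∏ _k ∈ Finset.range n, s := by simp
    rw [vdm_affine, abs_mul, abs_of_pos (by positivity), mul_rpow (by positivity) (abs_nonneg _),
      ← finsetProd_rpow _ _ fun k _ => by positivity, ← mul_assoc, hs_prod,
      ← Finset.prod_mul_distrib]
    congr 1
    refine Finset.prod_congr rfl fun k _ => ?_
    rw [rpow_add hs, rpow_one, rpow_natCast_mul hs.le]
  calc s ^ n * pL n β γ α (fun i => m + s * x i)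
      = (ZL n β γ α)⁻¹ * (s ^ n * |vdm n (fun i => m + s * x i)| ^ β) *
          ∏ k, laguerreWeight γ α (m + s * x k) := by
        simp only [pL, laguerreWeight]
        ring
    _ = (ZL n β γ α / ∏ k ∈ Finset.range n, s ^ (1 + k * β) * laguerreWeight γ α m)⁻¹ *
          |vdm n x| ^ β * ∏ k, laguerreWeight γ α (m + s * x k) / laguerreWeight γ α m := by
        rw [hvdm, Finset.prod_mul_distrib, Finset.prod_div_distrib, Finset.prod_const,
          Finset.prod_const, Finset.card_range, Finset.card_univ, Fintype.card_fin]
        field_simp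
        simp only [mul_comm β]
        ring

theorem measurable_pL (α : ℝ) : Measurable (pL n β γ α) := by
  have hw (k : Fin n) : Measurable fun x : Fin n → ℝ => laguerreWeight γ α (x k) :=
    (measurable_laguerreWeight γ α).comp (measurable_pi_apply k)
  have hvdm := measurable_vdm (n := n)
  exact ((hvdm.abs.pow_const β).const_mul _).mul (Finset.measurable_fun_prod _ fun k _ => hw k)

end EnsembleDensity

namespace IsGaussianScaling

variable {ι : Type*} {l : Filter ι} [l.IsCountablyGenerated] {β γ : ℝ} {α μ σ : ι → ℝ}

theorem tendsto_ZL_div (h : IsGaussianScaling γ l α μ σ) (n : ℕ) (β : ℝ) (hγ : 0 < γ) :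
    Tendsto (fun i => ZL n β γ (α i) /
        ∏ k ∈ Finset.range n, σ i ^ (1 + k * β) * laguerreWeight γ (α i) (μ i)) l
      (𝓝 (ZG n β γ)) := by
  have hfactor (k : ℕ) := (h.tendsto_Gamma_add_const_div_laguerreWeight hγ (k * β / 2)).mul_const
    (Gamma ((k + 1) * β / 2))
  have hprod := (tendsto_finsetProd (Finset.range n) fun k _ => hfactor k).const_mul
    (n.factorial / Gamma (β / 2) ^ n)
  simp only [mul_div_cancel₀ _ (two_ne_zero' ℝ)] at hprod
  rw [ZG_eq_prod]
  refine hprod.congr fun i => ?_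
  rw [ZL, mul_div_assoc, ← Finset.prod_div_distrib]
  congr 1
  refine Finset.prod_congr rfl fun k _ => ?_
  ring

theorem tendsto_pow_mul_pL (h : IsGaussianScaling γ l α μ σ) {n : ℕ} (hβ : 0 < β) (hγ : 0 < γ)
    (x : Fin n → ℝ) :
    Tendsto (fun i => σ i ^ n * pL n β γ (α i) fun k => μ i + σ i * x k) l
      (𝓝 (pG n β γ x)) := by
  have hconst := (h.tendsto_ZL_div n β hγ).inv₀ (ZG_pos n hβ hγ).ne'
  refine ((hconst.mul_const (|vdm n x| ^ β)).mul
    (tendsto_finsetProd _ fun k _ => h.tendsto_laguerreWeight_div hγ (x k))).congr' ?_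
  filter_upwards [h.eventually_center_pos hγ, h.eventually_width_pos hγ] with i hμ hσ
  exact (pow_mul_pL_affine hμ hσ x).symm

theorem eventually_norm_pow_mul_pL_le (h : IsGaussianScaling γ l α μ σ) (n : ℕ) (hβ : 0 < β)
    (hγ : 0 < γ) :
    ∀ᶠ i in l, ∀ x : Fin n → ℝ, ‖σ i ^ n * pL n β γ (α i) fun k => μ i + σ i * x k‖ ≤
      ((ZG n β γ)⁻¹ + 1) * exp γ ^ n * (|vdm n x| ^ β * ∏ k, exp (-(γ / 4) * |x k|)) := by
  have hconst := ((h.tendsto_ZL_div n β hγ).inv₀ (ZG_pos n hβ hγ).ne').norm.eventually_le_const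
    (show ‖(ZG n β γ)⁻¹‖ < (ZG n β γ)⁻¹ + 1 by
      rw [norm_of_nonneg (inv_pos.2 (ZG_pos n hβ hγ)).le]
      exact lt_add_one _)
  filter_upwards [hconst, h.eventually_center_pos hγ, h.eventually_width_pos hγ,
    h.eventually_laguerreWeight_div_le hγ] with i hC hμ hσ hw x
  have hw_nonneg (k : Fin n) :
      0 ≤ laguerreWeight γ (α i) (μ i + σ i * x k) / laguerreWeight γ (α i) (μ i) :=
    div_nonneg (laguerreWeight_nonneg _ _ _) (laguerreWeight_nonneg _ _ _)
  have hprod_nonneg := Finset.prod_nonneg fun k (_ : k ∈ Finset.univ) => hw_nonneg k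
  have hprod := Finset.prod_le_prod (fun k _ => hw_nonneg k) fun k (_ : k ∈ Finset.univ) => hw (x k)
  rw [Finset.prod_mul_distrib, Finset.prod_const, Finset.card_univ, Fintype.card_fin] at hprod
  have hZG := ZG_pos n hβ hγ
  rw [pow_mul_pL_affine hμ hσ, norm_mul, norm_mul, norm_of_nonneg hprod_nonneg,
    norm_of_nonneg (rpow_nonneg (abs_nonneg (vdm n x)) β)]
  calc ‖(ZL n β γ (α i) /
            ∏ k ∈ Finset.range n, σ i ^ (1 + k * β) * laguerreWeight γ (α i) (μ i))⁻¹‖ *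
          |vdm n x| ^ β *
          ∏ k, laguerreWeight γ (α i) (μ i + σ i * x k) / laguerreWeight γ (α i) (μ i)
      ≤ ((ZG n β γ)⁻¹ + 1) * |vdm n x| ^ β * (exp γ ^ n * ∏ k, exp (-(γ / 4) * |x k|)) := by
        gcongr
    _ = ((ZG n β γ)⁻¹ + 1) * exp γ ^ n * (|vdm n x| ^ β * ∏ k, exp (-(γ / 4) * |x k|)) := by
        ring

end IsGaussianScaling

theorem stmt1_general {ι : Type*} {l : Filter ι} [l.IsCountablyGenerated] (n : ℕ) {β γ : ℝ}
    (hβ : 0 < β) (hγ : 0 < γ) {α μ σ : ι → ℝ} (h : IsGaussianScaling γ l α μ σ) :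
    Tendsto (fun i => ∫ x : Fin n → ℝ,
        |σ i ^ n * pL n β γ (α i) (fun k => μ i + σ i * x k) - pG n β γ x|)
      l (𝓝 0) := by
  refine tendsto_integral_norm_sub_of_dominated (.of_forall fun i => ?_)
    ((integrable_abs_vdm_rpow_mul_prod_exp hβ.le (by positivity)).const_mul _)
    ((h.eventually_norm_pow_mul_pL_le n hβ hγ).mono fun i hi => .of_forall hi)
    (.of_forall (h.tendsto_pow_mul_pL hβ hγ))
  exact (((measurable_pL (α i)).comp (by fun_prop)).const_mul _).aestronglyMeasurable

/-- Laguerre-to-Gaussian transition in total variation: the `L¹` distance between the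
rescaled Laguerre β-ensemble eigenvalue density and the Gaussian β-ensemble eigenvalue
density tends to `0` as `α → ∞`; in particular the induced probability measures converge
in total variation. -/
theorem stmt1 (n : ℕ) (hn : 1 ≤ n) (β γ cμ cσ : ℝ) (hβ : 0 < β) (hγ : 0 < γ)
    (μ σ : ℝ → ℝ)
    (hμ : Tendsto (fun α => μ α - α / γ) atTop (nhds cμ))
    (hσ : Tendsto (fun α => σ α - Real.sqrt (2 * α / γ)) atTop (nhds cσ)) :
    Tendsto (fun α => ∫ x : Fin n → ℝ,
        |σ α ^ n * pL n β γ α (fun i => μ α + σ α * x i) - pG n β γ x|)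
      atTop (nhds 0) := by
  exact stmt1_general n hβ hγ (.of_tendsto_sub hγ tendsto_id hμ hσ)
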